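/- arXiv:2412.07281 — 4 statements merged into one kernel-verified Lean document; each statement's English description precedes it below -/
import Mathlib

section
/- Let S be a numerical semigroup with multiplicity m, let a be a minimal generator of S, and suppose a > max(m, F(S)). Then S \ {a} is a numerical semigroup and 𝔑(S) is a proper subset of 𝔑(S \ {a}). -/
open Pointwise

/-- A numerical semigroup: an additive submonoid of `ℕ` with finite complement. -/
def IsNumericalSemigroup (S : Set ℕ) : Prop :=
  0 ∈ S ∧ (∀ a ∈ S, ∀ b ∈ S, a + b ∈ S) ∧ Sᶜ.Finite

/-- A normalized (relative) ideal of `S`: a subset of `ℕ` with `min I = 0`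
(equivalently `0 ∈ I`) satisfying `I + S ⊆ I`. -/
def IsNormalizedIdeal (S I : Set ℕ) : Prop :=
  0 ∈ I ∧ ∀ i ∈ I, ∀ s ∈ S, i + s ∈ I

/-- The set `𝔑(S)` of normalized ideals of `S`. -/
def NI (S : Set ℕ) : Set (Set ℕ) := {I : Set ℕ | IsNormalizedIdeal S I}

/-- The multiplicity of `S`: its least nonzero element. -/
noncomputable def multNS (S : Set ℕ) : ℕ := sInf {n : ℕ | n ∈ S ∧ n ≠ 0}

/-- The Frobenius number of `S` (or of an ideal): the largest natural number not in `S`. -/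
noncomputable def frobNS (S : Set ℕ) : ℕ := sSup Sᶜ

/-- A minimal generator of `S`: a nonzero element of `S` that is not the sum
of two nonzero elements of `S`. -/
def IsMinimalGenerator (S : Set ℕ) (a : ℕ) : Prop :=
  a ∈ S ∧ a ≠ 0 ∧ ¬ ∃ b ∈ S, ∃ c ∈ S, b ≠ 0 ∧ c ≠ 0 ∧ a = b + c

/-- A minimal generator of an ideal `I` of a numerical semigroup `T`:
an element `x ∈ I` with `x ≠ y + t` for every `y ∈ I` and nonzero `t ∈ T`. -/
def IsMinGenOfIdeal (T I : Set ℕ) (x : ℕ) : Prop :=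
  x ∈ I ∧ ∀ y ∈ I, ∀ t ∈ T, t ≠ 0 → x ≠ y + t

/-- The order `⪯` on normalized ideals: `I ⪯ J` iff `I + K = J` for some `K ∈ 𝔑(S)`. -/
def Preceq (S I J : Set ℕ) : Prop :=
  ∃ K : Set ℕ, IsNormalizedIdeal S K ∧ I + K = J

/-- `M` is the supremum of `{I, J}` in `(𝔑(S), ⪯)`. -/
def IsSupNI (S I J M : Set ℕ) : Prop :=
  IsNormalizedIdeal S M ∧ Preceq S I M ∧ Preceq S J M ∧
    ∀ L : Set ℕ, IsNormalizedIdeal S L → Preceq S I L → Preceq S J L → Preceq S M L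

/-- `M` is the infimum of `{I, J}` in `(𝔑(S), ⪯)`. -/
def IsInfNI (S I J M : Set ℕ) : Prop :=
  IsNormalizedIdeal S M ∧ Preceq S M I ∧ Preceq S M J ∧
    ∀ L : Set ℕ, IsNormalizedIdeal S L → Preceq S L I → Preceq S L J → Preceq S L M

/-- `(𝔑(S), ⪯)` is a lattice: every pair of normalized ideals has a supremum
and an infimum with respect to `⪯`. -/
def NILattice (S : Set ℕ) : Prop :=
  ∀ I J : Set ℕ, IsNormalizedIdeal S I → IsNormalizedIdeal S J →
    (∃ M : Set ℕ, IsSupNI S I J M) ∧ (∃ M : Set ℕ, IsInfNI S I J M)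

/-- The ordinary numerical semigroup `H_m = {0} ∪ {n : n ≥ m}`. -/
def ordinaryNS (m : ℕ) : Set ℕ := {0} ∪ {n : ℕ | m ≤ n}

/-- `I ∈ 𝔑(S) \ {S}` is `+`-irreducible if `I = J + K` with `J, K ∈ 𝔑(S)`
implies `I = J` or `I = K`. -/
def PlusIrreducible (S I : Set ℕ) : Prop :=
  IsNormalizedIdeal S I ∧ I ≠ S ∧
    ∀ J K : Set ℕ, IsNormalizedIdeal S J → IsNormalizedIdeal S K → I = J + K → I = J ∨ I = K

theorem NI_antitone : Antitone NI :=
  fun _ _ hST _ hI => ⟨hI.1, fun i hi s hs => hI.2 i hi s (hST hs)⟩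

theorem IsNormalizedIdeal.subset {S I : Set ℕ} (hI : IsNormalizedIdeal S I) : S ⊆ I :=
  fun s hs => by simpa only [zero_add] using hI.2 0 hI.1 s hs

theorem IsNormalizedIdeal.NI_ssubset_NI {S T : Set ℕ} (hT : IsNormalizedIdeal T T)
    (hTS : T ⊂ S) : NI S ⊂ NI T := by
  have hT_notMem : T ∉ NI S := fun hT_mem => hTS.not_subset (IsNormalizedIdeal.subset hT_mem)
  exact (Set.ssubset_iff_of_subset (NI_antitone hTS.subset)).2 ⟨T, hT, hT_notMem⟩

theorem IsNumericalSemigroup.isNormalizedIdeal_self {S : Set ℕ} (hS : IsNumericalSemigroup S) :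
    IsNormalizedIdeal S S :=
  ⟨hS.1, hS.2.1⟩

theorem IsMinimalGenerator.add_ne {S : Set ℕ} {a b c : ℕ} (ha : IsMinimalGenerator S a)
    (hb : b ∈ S \ {a}) (hc : c ∈ S \ {a}) : b + c ≠ a := by
  obtain ⟨hbS, hba : b ≠ a⟩ := hb
  obtain ⟨hcS, hca : c ≠ a⟩ := hc
  intro hbc
  have hb0 : b ≠ 0 := by rintro rfl; exact hca (by simpa only [zero_add] using hbc)
  have hc0 : c ≠ 0 := by rintro rfl; exact hba hbc
  exact ha.2.2 ⟨b, hbS, c, hcS, hb0, hc0, hbc.symm⟩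

theorem IsNumericalSemigroup.sdiff_singleton {S : Set ℕ} {a : ℕ} (hS : IsNumericalSemigroup S)
    (ha : IsMinimalGenerator S a) : IsNumericalSemigroup (S \ {a}) := by
  obtain ⟨zero_mem, add_mem, finite_compl⟩ := hS
  refine ⟨⟨zero_mem, ha.2.1.symm⟩, fun b hb c hc => ?_, ?_⟩
  · exact ⟨add_mem b hb.1 c hc.1, ha.add_ne hb hc⟩
  · rw [Set.compl_sdiff]
    exact (Set.finite_singleton a).union finite_compl

theorem NI_ssubset_NI_remove_min_gen_general {S : Set ℕ} {a : ℕ} (hS : IsNumericalSemigroup S)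
    (ha : IsMinimalGenerator S a) :
    IsNumericalSemigroup (S \ {a}) ∧ NI S ⊂ NI (S \ {a}) := by
  have hSa : IsNumericalSemigroup (S \ {a}) := hS.sdiff_singleton ha
  exact ⟨hSa, hSa.isNormalizedIdeal_self.NI_ssubset_NI (Set.sdiff_singleton_ssubset.2 ha.1)⟩

/-- if `a` is a minimal generator of `S` with `a > max (m S) (F S)`,
then `S \ {a}` is a numerical semigroup and `𝔑(S) ⊊ 𝔑(S \ {a})`. -/
theorem NI_ssubset_NI_remove_min_gen (S : Set ℕ) (hS : IsNumericalSemigroup S)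
    (a : ℕ) (ha : IsMinimalGenerator S a) (hgt : max (multNS S) (frobNS S) < a) :
    IsNumericalSemigroup (S \ {a}) ∧ NI S ⊂ NI (S \ {a}) :=
  NI_ssubset_NI_remove_min_gen_general hS ha
end

section
/- Let S be a numerical semigroup with multiplicity m, let a be a minimal generator of S with a > max(m, F(S)), and set T = S \ {a}. Then 𝔑(T) \ 𝔑(S) is exactly the set of normalized ideals of T that do not contain a; that is, for I ∈ 𝔑(T), one has I ∈ 𝔑(S) if and only if a ∈ I. -/
open Pointwise

/-!
An ideal `I` of `S \ {a}` containing `0` contains `S \ {a}`, hence, as `a` exceeds the Frobenius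
number of `S`, every integer greater than `a`. It is an ideal of `S` as soon as `I + a ⊆ I`, and
since every `i + a` with `0 < i` already lies in `I`, the only condition left is the one for
`i = 0`, namely `a ∈ I`.
-/

theorem Ioi_frobNS_subset {S : Set ℕ} (hS : BddAbove Sᶜ) : Set.Ioi (frobNS S) ⊆ S := by
  intro n hn
  by_contra hnS
  exact (le_csSup hS hnS).not_gt hn

namespace IsNormalizedIdeal

variable {S I : Set ℕ} {a : ℕ}

theorem subset_s2 (hI : IsNormalizedIdeal S I) : S ⊆ I := fun s hs => by
  simpa only [zero_add] using hI.2 0 hI.1 s hs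

theorem iff_forall_add_mem_of_diff_singleton (hI : IsNormalizedIdeal (S \ {a}) I) (ha : a ∈ S) :
    IsNormalizedIdeal S I ↔ ∀ i ∈ I, i + a ∈ I := by
  refine ⟨fun hSI i hi => hSI.2 i hi a ha, fun hadd => ⟨hI.1, fun i hi s hs => ?_⟩⟩
  obtain rfl | hsa := eq_or_ne s a
  · exact hadd i hi
  · exact hI.2 i hi s ⟨hs, hsa⟩

end IsNormalizedIdeal

theorem forall_add_mem_iff_mem_of_Ioi_subset {I : Set ℕ} {a : ℕ} (h0 : 0 ∈ I)
    (hIoi : Set.Ioi a ⊆ I) : (∀ i ∈ I, i + a ∈ I) ↔ a ∈ I := by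
  refine ⟨fun hadd => by simpa only [zero_add] using hadd 0 h0, fun haI i _ => ?_⟩
  obtain rfl | hi := i.eq_zero_or_pos
  · rwa [zero_add]
  · exact hIoi (Nat.lt_add_of_pos_left hi)

theorem mem_NI_iff_mem_remove_min_gen_general {S I : Set ℕ} {a : ℕ} (ha : a ∈ S)
    (hIoi : Set.Ioi a ⊆ S) (hI : IsNormalizedIdeal (S \ {a}) I) :
    IsNormalizedIdeal S I ↔ a ∈ I := by
  have hIoiI : Set.Ioi a ⊆ I := fun n hn => hI.subset_s2 ⟨hIoi hn, ne_of_gt hn⟩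
  exact (hI.iff_forall_add_mem_of_diff_singleton ha).trans
    (forall_add_mem_iff_mem_of_Ioi_subset hI.1 hIoiI)

/-- with `T = S \ {a}`, an ideal `I ∈ 𝔑(T)` belongs to `𝔑(S)` if
and only if `a ∈ I`; thus `𝔑(T) \ 𝔑(S)` consists of the normalized ideals of
`T` not containing `a`. -/
theorem mem_NI_iff_mem_remove_min_gen (S : Set ℕ) (hS : IsNumericalSemigroup S)
    (a : ℕ) (ha : IsMinimalGenerator S a) (hgt : max (multNS S) (frobNS S) < a) :
    ∀ I : Set ℕ, IsNormalizedIdeal (S \ {a}) I → (IsNormalizedIdeal S I ↔ a ∈ I) := by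
  have hIoi : Set.Ioi a ⊆ S :=
    (Set.Ioi_subset_Ioi (max_lt_iff.mp hgt).2.le).trans (Ioi_frobNS_subset hS.2.2.bddAbove)
  exact fun I => mem_NI_iff_mem_remove_min_gen_general ha.1 hIoi
end

section
/- For every integer m ≥ 1, 𝔑(H_m) is a proper subset of 𝔑(H_{m+1}); moreover, for every I ∈ 𝔑(H_{m+1}), one has I ∈ 𝔑(H_m) if and only if m ∈ I. -/
open Pointwise

theorem mem_ordinaryNS {m n : ℕ} : n ∈ ordinaryNS m ↔ n = 0 ∨ m ≤ n :=
  Iff.rfl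

theorem isNormalizedIdeal_ordinaryNS_iff {m : ℕ} {I : Set ℕ} :
    IsNormalizedIdeal (ordinaryNS m) I ↔ ordinaryNS m ⊆ I := by
  refine ⟨IsNormalizedIdeal.subset, fun hsub ↦ ⟨hsub (mem_ordinaryNS.2 (Or.inl rfl)), ?_⟩⟩
  intro i hi s hs
  obtain rfl | hms := mem_ordinaryNS.1 hs
  · exact hi
  · exact hsub (mem_ordinaryNS.2 (Or.inr (le_add_left hms)))

theorem NI_ordinaryNS (m : ℕ) : NI (ordinaryNS m) = Set.Ici (ordinaryNS m) :=
  Set.ext fun _ ↦ isNormalizedIdeal_ordinaryNS_iff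

theorem insert_ordinaryNS_succ (m : ℕ) : insert m (ordinaryNS (m + 1)) = ordinaryNS m := by
  ext n
  simp only [Set.mem_insert_iff, mem_ordinaryNS]
  omega

theorem notMem_ordinaryNS_succ {m : ℕ} (hm : m ≠ 0) : m ∉ ordinaryNS (m + 1) := by
  simp [mem_ordinaryNS, hm]

theorem ordinaryNS_succ_ssubset {m : ℕ} (hm : m ≠ 0) : ordinaryNS (m + 1) ⊂ ordinaryNS m := by
  simpa only [insert_ordinaryNS_succ] using Set.ssubset_insert (notMem_ordinaryNS_succ hm)

theorem isNormalizedIdeal_ordinaryNS_iff_succ {m : ℕ} {I : Set ℕ} :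
    IsNormalizedIdeal (ordinaryNS m) I ↔ m ∈ I ∧ IsNormalizedIdeal (ordinaryNS (m + 1)) I := by
  simp only [isNormalizedIdeal_ordinaryNS_iff]
  rw [← insert_ordinaryNS_succ, Set.insert_subset_iff]

/-- `𝔑(H_m) ⊊ 𝔑(H_{m+1})`, and for `I ∈ 𝔑(H_{m+1})` one has
`I ∈ 𝔑(H_m)` iff `m ∈ I`. -/
theorem NI_ordinary_ssubset_succ (m : ℕ) (hm : 1 ≤ m) :
    NI (ordinaryNS m) ⊂ NI (ordinaryNS (m + 1)) ∧
    ∀ I : Set ℕ, IsNormalizedIdeal (ordinaryNS (m + 1)) I →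
      (IsNormalizedIdeal (ordinaryNS m) I ↔ m ∈ I) := by
  constructor
  · rw [NI_ordinaryNS, NI_ordinaryNS, Set.Ici_ssubset_Ici]
    exact ordinaryNS_succ_ssubset (Nat.one_le_iff_ne_zero.1 hm)
  · intro I hI
    rw [isNormalizedIdeal_ordinaryNS_iff_succ, and_iff_left hI]
end

section
/- Let S be a numerical semigroup with multiplicity m(S) ≥ 5. Then the poset (𝔑(S), ⪯) is neither a join semilattice nor a meet semilattice: there exist I, J ∈ 𝔑(S) having no supremum with respect to ⪯, and there exist I, J ∈ 𝔑(S) having no infimum with respect to ⪯. -/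
open Pointwise

/-!
Truncated below `5`, the ideals `{0, 1}` and `{0, 1, 3}` both lie below `{0, 1, 2, 3}` and
`{0, 1, 3, 4}`, and nothing fits in between: an intermediate `M` would truncate to `{0, 1, 3}`,
but a sum `{0, 1} + K` that contains `3` contains `2` or `4`. Hence the lower pair has no supremum
and the upper pair no infimum.
-/

section

variable {S I J P Q M A B C : Set ℕ} {c k n : ℕ}

theorem mem_add_pair_zero_iff : n ∈ A + {0, k} ↔ n ∈ A ∨ k ≤ n ∧ n - k ∈ A := by
  simp only [Set.mem_add, Set.mem_insert_iff, Set.mem_singleton_iff, exists_eq_or_imp,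
    exists_eq_left]
  constructor
  · rintro ⟨a, ha, rfl | rfl⟩
    · exact .inl ha
    · exact .inr ⟨Nat.le_add_left k a, by rwa [Nat.add_sub_cancel]⟩
  · rintro (hn | ⟨hkn, hn⟩)
    · exact ⟨n, hn, .inl (add_zero n)⟩
    · exact ⟨n - k, hn, .inr (Nat.sub_add_cancel hkn)⟩

theorem Preceq.subset (h : Preceq S I J) : I ⊆ J := by
  obtain ⟨K, hK, rfl⟩ := h
  exact Set.subset_add_left I hK.1

theorem Preceq.mem_or_add_two_mem (h : Preceq S I M) (h0 : 0 ∈ I) (h1 : 1 ∈ I)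
    (hI : ∀ i ∈ I, i ≤ n + 1 → i ≤ 1) (hn : n + 1 ∈ M) : n ∈ M ∨ n + 2 ∈ M := by
  obtain ⟨K, -, rfl⟩ := h
  obtain ⟨i, hi, k, hk, hik⟩ := Set.mem_add.mp hn
  have hi_le_one : i ≤ 1 := hI i hi (by lia)
  obtain rfl | rfl : i = 0 ∨ i = 1 := by lia
  · exact .inr (Set.mem_add.mpr ⟨1, h1, k, hk, by lia⟩)
  · exact .inl (Set.mem_add.mpr ⟨0, h0, k, hk, by lia⟩)

/-- Four normalized ideals violating the interpolation property of `⪯`: both `I` and `J` lie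
below both `P` and `Q`, but no `M` separates the two pairs. Such a configuration obstructs both
semilattice structures. -/
structure IsBowtie (S I J P Q : Set ℕ) : Prop where
  ideal_left_lower : IsNormalizedIdeal S I
  ideal_right_lower : IsNormalizedIdeal S J
  ideal_left_upper : IsNormalizedIdeal S P
  ideal_right_upper : IsNormalizedIdeal S Q
  left_preceq_left : Preceq S I P
  left_preceq_right : Preceq S I Q
  right_preceq_left : Preceq S J P
  right_preceq_right : Preceq S J Q
  not_between : ∀ M, Preceq S I M → Preceq S J M → Preceq S M P → ¬ Preceq S M Q

theorem IsBowtie.not_exists_isSupNI (h : IsBowtie S I J P Q) : ¬ ∃ M, IsSupNI S I J M := by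
  rintro ⟨M, -, hIM, hJM, hM⟩
  exact h.not_between M hIM hJM
    (hM P h.ideal_left_upper h.left_preceq_left h.right_preceq_left)
    (hM Q h.ideal_right_upper h.left_preceq_right h.right_preceq_right)

theorem IsBowtie.not_exists_isInfNI (h : IsBowtie S I J P Q) : ¬ ∃ M, IsInfNI S P Q M := by
  rintro ⟨M, -, hMP, hMQ, hM⟩
  exact h.not_between M
    (hM I h.ideal_left_lower h.left_preceq_left h.left_preceq_right)
    (hM J h.ideal_right_lower h.right_preceq_left h.right_preceq_right) hMP hMQ

/-- The set `A` together with all integers `n ≥ c`. When `c` is at most the multiplicity of `S`,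
this turns any `A ∋ 0` into a normalized ideal of `S`. -/
def withTail (c : ℕ) (A : Set ℕ) : Set ℕ := A ∪ Set.Ici c

theorem mem_withTail : n ∈ withTail c A ↔ n ∈ A ∨ c ≤ n := Iff.rfl

theorem isNormalizedIdeal_withTail (hS : ∀ s ∈ S, s ≠ 0 → c ≤ s) (hA : 0 ∈ A) :
    IsNormalizedIdeal S (withTail c A) := by
  refine ⟨.inl hA, fun i hi s hs => ?_⟩
  obtain rfl | hs0 := eq_or_ne s 0
  · exact hi
  · exact .inr ((hS s hs hs0).trans (Nat.le_add_left s i))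

theorem withTail_add_withTail (hA : 0 ∈ A) :
    withTail c A + withTail c B = withTail c (A + B) := by
  apply Set.Subset.antisymm
  · rintro _ ⟨a, ha | ha, b, hb | hb, rfl⟩
    · exact .inl (Set.add_mem_add ha hb)
    · exact .inr (hb.trans (Nat.le_add_left b a))
    · exact .inr (ha.trans (Nat.le_add_right a b))
    · exact .inr (ha.trans (Nat.le_add_right a b))
  · rintro n (⟨a, ha, b, hb, rfl⟩ | hn)
    · exact Set.add_mem_add (.inl ha) (.inl hb)
    · exact Set.mem_add.mpr ⟨0, .inl hA, n, .inr hn, zero_add n⟩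

theorem preceq_withTail (hS : ∀ s ∈ S, s ≠ 0 → c ≤ s) (hA : 0 ∈ A) (hB : 0 ∈ B)
    (hC : withTail c (A + B) = withTail c C) : Preceq S (withTail c A) (withTail c C) :=
  ⟨withTail c B, isNormalizedIdeal_withTail hS hB, (withTail_add_withTail hA).trans hC⟩

theorem not_preceq_of_between_withTail (hIM : Preceq S (withTail 5 {0, 1}) M)
    (hJM : Preceq S (withTail 5 {0, 1, 3}) M) (hMP : Preceq S M (withTail 5 {0, 1, 2, 3})) :
    ¬ Preceq S M (withTail 5 {0, 1, 3, 4}) := by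
  intro hMQ
  have three_mem : 3 ∈ M := hJM.subset (by simp [mem_withTail])
  have two_notMem : 2 ∉ M := fun h => by simpa [mem_withTail] using hMQ.subset h
  have four_notMem : 4 ∉ M := fun h => by simpa [mem_withTail] using hMP.subset h
  have two_mem_or_four_mem : 2 ∈ M ∨ 4 ∈ M :=
    hIM.mem_or_add_two_mem (by simp [mem_withTail]) (by simp [mem_withTail])
      (by grind [mem_withTail]) three_mem
  exact two_mem_or_four_mem.elim two_notMem four_notMem

theorem isBowtie_withTail (hS : ∀ s ∈ S, s ≠ 0 → 5 ≤ s) :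
    IsBowtie S (withTail 5 {0, 1}) (withTail 5 {0, 1, 3})
      (withTail 5 {0, 1, 2, 3}) (withTail 5 {0, 1, 3, 4}) where
  ideal_left_lower := isNormalizedIdeal_withTail hS (by simp)
  ideal_right_lower := isNormalizedIdeal_withTail hS (by simp)
  ideal_left_upper := isNormalizedIdeal_withTail hS (by simp)
  ideal_right_upper := isNormalizedIdeal_withTail hS (by simp)
  left_preceq_left := preceq_withTail (B := {0, 2}) hS (by simp) (by simp) <| by
    ext n; grind [mem_withTail, mem_add_pair_zero_iff]
  left_preceq_right := preceq_withTail (B := {0, 3}) hS (by simp) (by simp) <| by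
    ext n; grind [mem_withTail, mem_add_pair_zero_iff]
  right_preceq_left := preceq_withTail (B := {0, 2}) hS (by simp) (by simp) <| by
    ext n; grind [mem_withTail, mem_add_pair_zero_iff]
  right_preceq_right := preceq_withTail (B := {0, 3}) hS (by simp) (by simp) <| by
    ext n; grind [mem_withTail, mem_add_pair_zero_iff]
  not_between _ := not_preceq_of_between_withTail

end

theorem not_semilattice_of_five_le_mult_general (S : Set ℕ) (hS : ∀ s ∈ S, s ≠ 0 → 5 ≤ s) :
    (∃ I J : Set ℕ, IsNormalizedIdeal S I ∧ IsNormalizedIdeal S J ∧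
      ¬ ∃ M : Set ℕ, IsSupNI S I J M) ∧
    (∃ I J : Set ℕ, IsNormalizedIdeal S I ∧ IsNormalizedIdeal S J ∧
      ¬ ∃ M : Set ℕ, IsInfNI S I J M) :=
  have h := isBowtie_withTail hS
  ⟨⟨_, _, h.ideal_left_lower, h.ideal_right_lower, h.not_exists_isSupNI⟩,
    ⟨_, _, h.ideal_left_upper, h.ideal_right_upper, h.not_exists_isInfNI⟩⟩

/-- if `m(S) ≥ 5`, then `(𝔑(S), ⪯)` is neither a join semilattice
nor a meet semilattice. -/
theorem not_semilattice_of_five_le_mult (S : Set ℕ) (hS : IsNumericalSemigroup S)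
    (h5 : 5 ≤ multNS S) :
    (∃ I J : Set ℕ, IsNormalizedIdeal S I ∧ IsNormalizedIdeal S J ∧
      ¬ ∃ M : Set ℕ, IsSupNI S I J M) ∧
    (∃ I J : Set ℕ, IsNormalizedIdeal S I ∧ IsNormalizedIdeal S J ∧
      ¬ ∃ M : Set ℕ, IsInfNI S I J M) :=
  not_semilattice_of_five_le_mult_general S fun _ hs hs0 => h5.trans (Nat.sInf_le ⟨hs, hs0⟩)
end
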